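/- Let k ≥ 3 be an integer and let G be a finite simple graph with m < 2k² edges. Then G admits a k-partition (V_1, …, V_k) such that (i) max_{1≤i≤k} e(V_i) ≤ m/k² + (k−1)/(2k²)·h(m), and (ii) e(V_1, …, V_k) ≥ (k−1)/k·m + (k−1)/(2k)·h(m) − (k−2)²/(8k). -/

import Mathlib

open Finset

noncomputable def hfun (x : ℝ) : ℝ := Real.sqrt (2 * x + 1 / 4) - 1 / 2

variable {V : Type*} [Fintype V] [DecidableEq V]

/-- Number of edges of `G` with both endpoints in `S`. -/
def eIn (G : SimpleGraph V) [DecidableRel G.Adj] (S : Finset V) : ℕ :=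
  (Finset.univ.filter (fun p : V × V => G.Adj p.1 p.2 ∧ p.1 ∈ S ∧ p.2 ∈ S)).card / 2

/-- Number of edges of `G` with one endpoint in `S` and the other in `T` (for disjoint `S`, `T`). -/
def eCross (G : SimpleGraph V) [DecidableRel G.Adj] (S T : Finset V) : ℕ :=
  (Finset.univ.filter (fun p : V × V => G.Adj p.1 p.2 ∧ p.1 ∈ S ∧ p.2 ∈ T)).card

/-- `P` is a partition of the vertex set into `k` pairwise disjoint (possibly empty) parts. -/
def IsKPartition {k : ℕ} (P : Fin k → Finset V) : Prop :=
  (∀ i j : Fin k, i ≠ j → Disjoint (P i) (P j)) ∧ ∀ v : V, ∃ i, v ∈ P i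

/-- The number of crossing edges of a `k`-partition. -/
def crossTotal (G : SimpleGraph V) [DecidableRel G.Adj] {k : ℕ} (P : Fin k → Finset V) : ℕ :=
  ∑ i : Fin k, ∑ j : Fin k, if i < j then eCross G (P i) (P j) else 0

/-- `f_k(G)`: the maximum number of crossing edges over all `k`-partitions of `G`. -/
noncomputable def maxCut (G : SimpleGraph V) [DecidableRel G.Adj] (k : ℕ) : ℕ :=
  sSup {n : ℕ | ∃ P : Fin k → Finset V, IsKPartition P ∧ crossTotal G P = n}

/-!
With `h = h(m)`, so that `h² + h = 2m`, the two bounds read `e(V_i) ≤ h (h + k) / (2k²)` and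
`m - e(V_1, …, V_k) ≤ (2h - k + 2)² / (8k)`. Both hold as soon as every class spans at most one
edge and at most `b` classes span an edge, provided `h ≥ k + b - 1` or `b = 0`. One may take the
least `b` with `m < C(k + b + 1, 2)` if that is below `k`, and `b = k` otherwise.

Such colourings are found by induction on `k`. A vertex of degree below `k` is coloured greedily,
and a set spanning at most one edge is split off as a class if enough edges go with it. Otherwise
the degrees are so low that disjoint triples, each spanning at most one edge, can be augmented
until the remaining vertices can be paired off: a triple with few edges to a second triple is
exchanged against vertices of that triple to give two new ones.
-/

section Counting

variable {W : Type*} (G : SimpleGraph W) [DecidableRel G.Adj]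

/-- The `0`-`1` indicator of adjacency, in `ℕ` so that edge counts over small sets are linear
arithmetic. -/
def adjInd (v w : W) : ℕ := if G.Adj v w then 1 else 0

/-- The number of neighbours of `v` inside `S`. -/
def degIn (S : Finset W) (v : W) : ℕ := #{w ∈ S | G.Adj v w}

/-- The number of edges of `G` with both endpoints in `S`, on a vertex type that need not be
finite. -/
def edgeCount (S : Finset W) : ℕ := #{e ∈ S.sym2 | e ∈ G.edgeSet}

theorem degIn_eq_sum (S : Finset W) (v : W) : degIn G S v = ∑ w ∈ S, adjInd G v w :=
  card_filter _ _

theorem adjInd_comm (v w : W) : adjInd G v w = adjInd G w v := by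
  simp only [adjInd, G.adj_comm]

theorem adjInd_le_one (v w : W) : adjInd G v w ≤ 1 := by
  unfold adjInd; split_ifs <;> simp

theorem adjInd_eq_zero_iff {v w : W} : adjInd G v w = 0 ↔ ¬G.Adj v w := by
  simp [adjInd]

theorem degIn_mono {S T : Finset W} (h : S ⊆ T) (v : W) : degIn G S v ≤ degIn G T v :=
  card_le_card (filter_subset_filter _ h)

theorem edgeCount_mono {S T : Finset W} (h : S ⊆ T) : edgeCount G S ≤ edgeCount G T :=
  card_le_card (filter_subset_filter _ (sym2_mono h))

@[simp]
theorem edgeCount_empty : edgeCount G ∅ = 0 := by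
  simp [edgeCount]

theorem degIn_singleton (v w : W) : degIn G {w} v = adjInd G v w := by
  simp only [degIn_eq_sum, sum_singleton]

theorem sum_degIn_comm (S T : Finset W) : ∑ v ∈ S, degIn G T v = ∑ v ∈ T, degIn G S v := by
  simp only [degIn_eq_sum]
  rw [sum_comm]
  exact sum_congr rfl fun v _ ↦ sum_congr rfl fun w _ ↦ adjInd_comm G w v

theorem degIn_lt_card {S : Finset W} {v : W} (hv : v ∈ S) : degIn G S v < #S :=
  card_lt_card (filter_ssubset.2 ⟨v, hv, G.loopless.irrefl v⟩)

theorem degIn_insert [DecidableEq W] {S : Finset W} {a : W} (ha : a ∉ S) (v : W) :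
    degIn G (insert a S) v = adjInd G v a + degIn G S v := by
  simp only [degIn_eq_sum, sum_insert ha]

theorem degIn_sdiff_add_degIn [DecidableEq W] {S U : Finset W} (h : S ⊆ U) (v : W) :
    degIn G (U \ S) v + degIn G S v = degIn G U v := by
  simp only [degIn_eq_sum, sum_sdiff h]

theorem edgeCount_insert [DecidableEq W] {S : Finset W} {a : W} (ha : a ∉ S) :
    edgeCount G (insert a S) = edgeCount G S + degIn G S a := by
  have hstar : #{e ∈ (insert a S).image (fun b ↦ s(a, b)) | e ∈ G.edgeSet} = degIn G S a := by
    rw [filter_image, card_image_of_injective _ fun _ _ ↦ Sym2.congr_right.1, filter_insert]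
    simp [degIn]
  rw [edgeCount, sym2_insert, filter_union, card_union_of_disjoint, hstar, add_comm, edgeCount]
  refine disjoint_left.2 fun e he he' ↦ ?_
  obtain ⟨b, -, rfl⟩ := mem_image.1 (mem_filter.1 he).1
  exact ha (mk_mem_sym2_iff.1 (mem_filter.1 he').1).1

theorem two_mul_edgeCount (S : Finset W) : 2 * edgeCount G S = ∑ v ∈ S, degIn G S v := by
  classical
  induction S using Finset.induction_on with
  | empty => simp
  | insert a S ha ih =>
    have hcross : ∑ v ∈ S, adjInd G v a = degIn G S a := by
      simp only [degIn_eq_sum, adjInd_comm G a]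
    have hloop : adjInd G a a = 0 := by simp [adjInd]
    rw [edgeCount_insert G ha, sum_insert ha]
    simp only [degIn_insert G ha, sum_add_distrib, hcross, hloop]
    omega

theorem two_mul_edgeCount_le (S : Finset W) : 2 * edgeCount G S ≤ #S * (#S - 1) := by
  rw [two_mul_edgeCount, ← smul_eq_mul]
  exact sum_le_card_nsmul _ _ _ fun v hv ↦ Nat.le_sub_one_of_lt (degIn_lt_card G hv)

theorem edgeCount_sdiff_add_sum_degIn [DecidableEq W] {S U : Finset W} (h : S ⊆ U) :
    edgeCount G (U \ S) + ∑ v ∈ S, degIn G U v = edgeCount G U + edgeCount G S := by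
  have hsplit : ∀ v, degIn G U v = degIn G (U \ S) v + degIn G S v := fun v ↦
    (degIn_sdiff_add_degIn G h v).symm
  have hU := two_mul_edgeCount G U
  rw [← sum_sdiff h] at hU
  simp only [hsplit, sum_add_distrib, ← two_mul_edgeCount] at hU ⊢
  have := sum_degIn_comm G (U \ S) S
  omega

theorem edgeCount_univ [Fintype W] : edgeCount G univ = #G.edgeFinset := by
  unfold edgeCount
  congr 1
  ext e
  simp

theorem edgeCount_singleton (v : W) : edgeCount G {v} = 0 := by
  classical simpa [degIn] using edgeCount_insert G (notMem_empty v)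

theorem edgeCount_pair [DecidableEq W] {x y : W} (h : x ≠ y) :
    edgeCount G {x, y} = adjInd G x y := by
  rw [edgeCount_insert G (by simpa using h), edgeCount_singleton, degIn_singleton, zero_add]

theorem edgeCount_triple [DecidableEq W] {x y z : W} (hxy : x ≠ y) (hxz : x ≠ z) (hyz : y ≠ z) :
    edgeCount G {x, y, z} = adjInd G x y + adjInd G x z + adjInd G y z := by
  rw [edgeCount_insert G (by simp [hxy, hxz]), edgeCount_pair G hyz,
    degIn_insert G (by simpa using hyz), degIn_singleton]
  ring

theorem exists_not_adj_of_edgeCount_le_one [DecidableEq W] {S : Finset W} (hcard : #S = 3)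
    (hS : edgeCount G S ≤ 1) :
    ∃ x y z, x ≠ y ∧ x ≠ z ∧ y ≠ z ∧ S = {x, y, z} ∧ ¬G.Adj x y ∧ ¬G.Adj y z := by
  obtain ⟨x, y, z, hxy, hxz, hyz, rfl⟩ := card_eq_three.1 hcard
  rw [edgeCount_triple G hxy hxz hyz] at hS
  simp only [← adjInd_eq_zero_iff]
  rcases Nat.eq_zero_or_pos (adjInd G x y) with h₁ | h₁
  · rcases Nat.eq_zero_or_pos (adjInd G y z) with h₂ | h₂
    · exact ⟨x, y, z, hxy, hxz, hyz, rfl, h₁, h₂⟩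
    · exact ⟨y, x, z, hxy.symm, hyz, hxz, insert_comm .., by rwa [adjInd_comm], by omega⟩
  · exact ⟨x, z, y, hxz, hxy, hyz.symm, by rw [pair_comm], by omega,
      by rw [adjInd_comm]; omega⟩

theorem exists_not_adj_of_sum_degIn_add_card_lt {S X U : Finset W}
    (h : ∑ v ∈ S, degIn G U v + #X < #U) : ∃ w ∈ U, w ∉ X ∧ ∀ v ∈ S, ¬G.Adj v w := by
  classical
  have hlt : #((S.biUnion fun v ↦ {w ∈ U | G.Adj v w}) ∪ X) < #U :=
    ((card_union_le _ _).trans (Nat.add_le_add_right card_biUnion_le _)).trans_lt h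
  obtain ⟨w, hw, hw'⟩ := exists_mem_notMem_of_card_lt_card hlt
  simp only [mem_union, mem_biUnion, mem_filter, hw, true_and, not_or, not_exists, not_and] at hw'
  exact ⟨w, hw, hw'.2, hw'.1⟩

theorem exists_not_adj_of_degIn_add_one_lt {U : Finset W} {v : W}
    (h : degIn G U v + 1 < #U) : ∃ w ∈ U, v ≠ w ∧ ¬G.Adj v w := by
  obtain ⟨w, hw, hwv, hadj⟩ := exists_not_adj_of_sum_degIn_add_card_lt G (S := {v}) (X := {v})
    (U := U) (by rwa [sum_singleton, card_singleton])
  exact ⟨w, hw, fun hvw ↦ hwv (by simp [hvw]), hadj v (mem_singleton_self v)⟩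

theorem card_le_degIn_add_one {U : Finset W} {v : W} (h : ∀ w ∈ U, v ≠ w → G.Adj v w) :
    #U ≤ degIn G U v + 1 := by
  by_contra! hdeg
  obtain ⟨w, hw, hvw, hadj⟩ := exists_not_adj_of_degIn_add_one_lt G hdeg
  exact hadj (h w hw hvw)

theorem exists_not_adj_of_edgeCount_lt_choose {U : Finset W} (h : edgeCount G U < (#U).choose 2) :
    ∃ x ∈ U, ∃ y ∈ U, x ≠ y ∧ ¬G.Adj x y := by
  obtain ⟨x, hx, hdeg⟩ : ∃ x ∈ U, degIn G U x < #U - 1 := by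
    refine exists_lt_of_sum_lt ?_
    rw [← two_mul_edgeCount, sum_const, smul_eq_mul]
    rw [Nat.choose_two_right] at h
    omega
  exact ⟨x, hx, exists_not_adj_of_degIn_add_one_lt G (by omega)⟩

end Counting

section Colorings

variable {W : Type*} {G : SimpleGraph W} [DecidableRel G.Adj]

/-- `U` can be split into `k` classes, each spanning at most one edge, at most `b` of which span
an edge. The classes are the fibres over `0, …, k - 1` of a colouring `f`, whose values outside
`U` are irrelevant. -/
def NearIndepColorable (G : SimpleGraph W) [DecidableRel G.Adj] (U : Finset W) (k b : ℕ) : Prop :=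
  ∃ f : W → ℕ, (∀ v ∈ U, f v < k) ∧ (∀ i, edgeCount G {v ∈ U | f v = i} ≤ 1) ∧
    ∑ i ∈ range k, edgeCount G {v ∈ U | f v = i} ≤ b

theorem sum_degIn_fiber_le (U : Finset W) (f : W → ℕ) (k : ℕ) (v : W) :
    ∑ i ∈ range k, degIn G {w ∈ U | f w = i} v ≤ degIn G U v := by
  have hfiber : ∀ i, degIn G {w ∈ U | f w = i} v = #{w ∈ {w ∈ U | G.Adj v w} | f w = i} :=
    fun i ↦ by rw [degIn, filter_comm]
  simp only [hfiber]
  exact (sum_card_fiberwise_eq_card_filter _ _ _).trans_le (card_filter_le _ _)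

namespace NearIndepColorable

theorem mono {U : Finset W} {k b c : ℕ} (h : NearIndepColorable G U k b) (hbc : b ≤ c) :
    NearIndepColorable G U k c := by
  obtain ⟨f, hlt, hclass, hsum⟩ := h
  exact ⟨f, hlt, hclass, hsum.trans hbc⟩

theorem empty (k b : ℕ) : NearIndepColorable G ∅ k b :=
  ⟨fun _ ↦ 0, by simp, by simp, by simp⟩

theorem of_erase [DecidableEq W] {U : Finset W} {k b : ℕ} {v : W} (hv : v ∈ U)
    (hdeg : degIn G U v < k) (h : NearIndepColorable G (U.erase v) k b) :
    NearIndepColorable G U k b := by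
  obtain ⟨f, hlt, hclass, hsum⟩ := h
  obtain ⟨i, hi, hfree⟩ : ∃ i ∈ range k, degIn G {w ∈ U.erase v | f w = i} v < 1 := by
    refine exists_lt_of_sum_lt ((sum_degIn_fiber_le _ f k v).trans_lt ?_)
    simpa using (degIn_mono G (erase_subset v U) v).trans_lt hdeg
  have hfiber : ∀ j, edgeCount G {w ∈ U | Function.update f v i w = j} =
      edgeCount G {w ∈ U.erase v | f w = j} := by
    intro j
    by_cases hj : i = j
    · have hcons : ({w ∈ U | Function.update f v i w = j} : Finset W) =
          insert v {w ∈ U.erase v | f w = j} := by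
        ext w; by_cases hw : w = v <;> simp [hw, hv, hj]
      rw [hcons, edgeCount_insert G (by simp), ← hj]
      omega
    · congr 1
      ext w; by_cases hw : w = v <;> simp [hw, hj]
  refine ⟨Function.update f v i, fun w hw ↦ ?_, fun j ↦ (hfiber j).trans_le (hclass j), ?_⟩
  · by_cases hwv : w = v
    · simpa [hwv] using hi
    · simpa [hwv] using hlt w (mem_erase.2 ⟨hwv, hw⟩)
  · simpa only [hfiber] using hsum

theorem of_sdiff [DecidableEq W] {S U : Finset W} {k b : ℕ} (hSU : S ⊆ U)
    (hS : edgeCount G S ≤ 1) (h : NearIndepColorable G (U \ S) k b) :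
    NearIndepColorable G U (k + 1) (b + edgeCount G S) := by
  obtain ⟨f, hlt, hclass, hsum⟩ := h
  have hnew : ({v ∈ U | (if v ∈ S then k else f v) = k} : Finset W) = S := by
    ext v
    by_cases hv : v ∈ S
    · simp [hv, hSU hv]
    · simpa [hv] using fun hvU ↦ (hlt v (mem_sdiff.2 ⟨hvU, hv⟩)).ne
  have hold : ∀ j, j ≠ k → ({v ∈ U | (if v ∈ S then k else f v) = j} : Finset W) =
      {v ∈ U \ S | f v = j} := by
    intro j hj
    ext v; by_cases hv : v ∈ S <;> simp [hv, hj.symm]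
  refine ⟨fun v ↦ if v ∈ S then k else f v, fun v hv ↦ ?_, fun i ↦ ?_, ?_⟩
  · by_cases hvS : v ∈ S
    · simp [hvS]
    · simpa [hvS] using (hlt v (mem_sdiff.2 ⟨hv, hvS⟩)).trans k.lt_succ_self
  · by_cases hi : i = k
    · rwa [hi, hnew]
    · rw [hold i hi]
      exact hclass i
  · rw [sum_range_succ, hnew]
    exact Nat.add_le_add_right ((sum_congr rfl fun i hi ↦
      congrArg _ (hold i (mem_range.1 hi).ne)).trans_le hsum) _

theorem of_card_le {k : ℕ} {U : Finset W} (h : #U ≤ 2 * k) :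
    NearIndepColorable G U k (#U - k) := by
  classical
  induction k generalizing U with
  | zero => simpa [card_eq_zero.1 (Nat.le_zero.1 h)] using empty 0 0
  | succ k ih =>
    obtain ⟨n, hn, hnU, hrest⟩ : ∃ n ≤ 2, n ≤ #U ∧ #U - n ≤ 2 * k ∧
        #U - n - k + (n - 1) ≤ #U - (k + 1) := by
      rcases le_or_gt #U (k + 1) with hsmall | hlarge
      · exact ⟨min 1 #U, by omega⟩
      · exact ⟨2, by omega⟩
    obtain ⟨S, hSU, rfl⟩ := exists_subset_card_eq hnU
    have hS : edgeCount G S ≤ #S - 1 := by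
      have := two_mul_edgeCount_le G S
      interval_cases #S <;> omega
    have hcard := card_sdiff_of_subset hSU
    exact (of_sdiff hSU (by omega) (ih (by omega))).mono (by omega)

theorem of_minDegree {k b M : ℕ}
    (h : ∀ U : Finset W, edgeCount G U < M → (∀ v ∈ U, k ≤ degIn G U v) →
      NearIndepColorable G U k b) (U : Finset W) (hU : edgeCount G U < M) :
    NearIndepColorable G U k b := by
  classical
  induction U using Finset.strongInduction with
  | H U ih =>
    by_cases hdeg : ∀ v ∈ U, k ≤ degIn G U v
    · exact h U hU hdeg
    · push Not at hdeg
      obtain ⟨v, hv, hlt⟩ := hdeg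
      exact of_erase hv hlt
        (ih _ (erase_ssubset hv) ((edgeCount_mono G (erase_subset v U)).trans_lt hU))

end NearIndepColorable

end Colorings

section Packings

variable {W : Type*} {G : SimpleGraph W} [DecidableRel G.Adj]

/-- Pairwise disjoint triples inside `U`, each spanning at most one edge: a stock of large colour
classes. -/
structure IsTriplePacking (G : SimpleGraph W) [DecidableRel G.Adj] (U : Finset W)
    (C : Finset (Finset W)) : Prop where
  subset : ∀ S ∈ C, S ⊆ U
  card_eq_three : ∀ S ∈ C, #S = 3
  edgeCount_le_one : ∀ S ∈ C, edgeCount G S ≤ 1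
  pairwiseDisjoint : (C : Set (Finset W)).PairwiseDisjoint id

namespace IsTriplePacking

theorem empty (U : Finset W) : IsTriplePacking G U ∅ where
  subset := by simp
  card_eq_three := by simp
  edgeCount_le_one := by simp
  pairwiseDisjoint := by simp

theorem anti {U : Finset W} {C D : Finset (Finset W)} (h : IsTriplePacking G U C) (hD : D ⊆ C) :
    IsTriplePacking G U D where
  subset S hS := h.subset S (hD hS)
  card_eq_three S hS := h.card_eq_three S (hD hS)
  edgeCount_le_one S hS := h.edgeCount_le_one S (hD hS)
  pairwiseDisjoint := h.pairwiseDisjoint.subset (coe_subset.2 hD)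

section DecidableEq

variable [DecidableEq W] {U S : Finset W} {C : Finset (Finset W)}

theorem sdiff (h : IsTriplePacking G U C) (hS : ∀ S' ∈ C, Disjoint S' S) :
    IsTriplePacking G (U \ S) C :=
  { h with subset := fun S' hS' ↦ subset_sdiff.2 ⟨h.subset S' hS', hS S' hS'⟩ }

theorem biUnion_subset (h : IsTriplePacking G U C) : C.biUnion id ⊆ U :=
  Finset.biUnion_subset.2 h.subset

theorem card_sdiff_biUnion (h : IsTriplePacking G U C) : #(U \ C.biUnion id) + 3 * #C = #U := by
  have hcard : #(C.biUnion id) = #C * 3 := by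
    rw [card_biUnion h.pairwiseDisjoint]
    exact sum_const_nat h.card_eq_three
  have := card_sdiff_add_card_eq_card h.biUnion_subset
  omega

theorem insert (h : IsTriplePacking G U C) (hSU : S ⊆ U \ C.biUnion id) (hcard : #S = 3)
    (hS : edgeCount G S ≤ 1) :
    IsTriplePacking G U (insert S C) ∧ #(insert S C) = #C + 1 := by
  obtain ⟨hSU, hdisj⟩ := subset_sdiff.1 hSU
  rw [disjoint_biUnion_right] at hdisj
  have hnotMem : S ∉ C := fun hmem ↦ by
    simp [show S = ∅ from disjoint_self.1 (hdisj S hmem)] at hcard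
  refine ⟨⟨?_, ?_, ?_, ?_⟩, card_insert_of_notMem hnotMem⟩
  · simpa using ⟨hSU, h.subset⟩
  · simpa using ⟨hcard, h.card_eq_three⟩
  · simpa using ⟨hS, h.edgeCount_le_one⟩
  · rw [coe_insert]
    exact h.pairwiseDisjoint.insert fun S' hS' _ ↦ hdisj S' hS'

theorem exists_replace {S₀ : Finset W} (h : IsTriplePacking G U C) (hS₀ : S₀ ∈ C)
    (hSU : S ⊆ S₀ ∪ U \ C.biUnion id) (hcard : #S = 3) (hS : edgeCount G S ≤ 1) :
    ∃ D, IsTriplePacking G U D ∧ #D = #C ∧ (S₀ ∪ U \ C.biUnion id) \ S ⊆ U \ D.biUnion id := by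
  have herase := h.anti (erase_subset S₀ C)
  have hfree : S₀ ∪ U \ C.biUnion id ⊆ U \ (C.erase S₀).biUnion id := by
    refine union_subset (subset_sdiff.2 ⟨h.subset S₀ hS₀, ?_⟩)
      (sdiff_subset_sdiff Subset.rfl (biUnion_subset_biUnion_of_subset_left _ (erase_subset _ _)))
    rw [disjoint_biUnion_right]
    exact fun S' hS' ↦ h.pairwiseDisjoint hS₀ (mem_of_mem_erase hS') (ne_of_mem_erase hS').symm
  obtain ⟨hD, hcardD⟩ := herase.insert (hSU.trans hfree) hcard hS
  refine ⟨_, hD, by rw [hcardD, card_erase_add_one hS₀], ?_⟩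
  rw [biUnion_insert, id, union_comm S]
  exact (sdiff_subset_sdiff hfree Subset.rfl).trans_eq sdiff_sdiff_left

theorem exists_sum_degIn_lt {T : Finset W} {q : ℕ} (h : IsTriplePacking G U C)
    (hT : ∑ v ∈ T, degIn G (C.biUnion id) v < q * #C) :
    ∃ S ∈ C, ∑ v ∈ S, degIn G T v < q := by
  refine exists_lt_of_sum_lt (f := fun S ↦ ∑ v ∈ id S, degIn G T v) ?_
  rwa [sum_const, smul_eq_mul, mul_comm #C, ← sum_biUnion h.pairwiseDisjoint, ← sum_degIn_comm]

end DecidableEq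

theorem nearIndepColorable {U : Finset W} {C : Finset (Finset W)} {k : ℕ}
    (h : IsTriplePacking G U C) (hU : #U ≤ 2 * k + #C) (hC : #C ≤ k) :
    NearIndepColorable G U k k := by
  classical
  induction C using Finset.induction_on generalizing U k with
  | empty => exact (NearIndepColorable.of_card_le (by simpa using hU)).mono (by simp at hU; omega)
  | insert S C hS ih =>
    rw [card_insert_of_notMem hS] at hU hC
    obtain ⟨k, rfl⟩ := Nat.exists_eq_add_one_of_ne_zero (show k ≠ 0 by omega)
    have hmem := mem_insert_self S C
    have hSU := h.subset S hmem
    have hrest := (h.anti (subset_insert S C)).sdiff (S := S) fun S' hS' ↦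
      h.pairwiseDisjoint (mem_insert_of_mem hS') hmem (ne_of_mem_of_not_mem hS' hS)
    have hcard := card_sdiff_of_subset hSU
    have hthree := h.card_eq_three S hmem
    have hone := h.edgeCount_le_one S hmem
    exact (NearIndepColorable.of_sdiff hSU hone (ih hrest (by omega) (by omega))).mono (by omega)

end IsTriplePacking

end Packings

section Critical

variable {W : Type*} {G : SimpleGraph W} [DecidableRel G.Adj]

theorem adjInd_add_adjInd_pos {U : Finset W} (htriple : ∀ S ⊆ U, #S = 3 → 0 < edgeCount G S)
    {x y w : W} (hx : x ∈ U) (hy : y ∈ U) (hw : w ∈ U) (hxy : x ≠ y) (hxw : x ≠ w) (hyw : y ≠ w)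
    (hadj : ¬G.Adj x y) : 0 < adjInd G x w + adjInd G y w := by
  classical
  have hpos := htriple {x, y, w} (by simp [insert_subset_iff, *])
    (card_eq_three.2 ⟨x, y, w, hxy, hxw, hyw, rfl⟩)
  rwa [edgeCount_triple G hxy hxw hyw, (adjInd_eq_zero_iff G).2 hadj, zero_add] at hpos

theorem card_le_degIn_add_degIn_of_not_adj {U : Finset W}
    (htriple : ∀ S ⊆ U, #S = 3 → 0 < edgeCount G S) {x y : W} (hx : x ∈ U) (hy : y ∈ U)
    (hxy : x ≠ y) (hadj : ¬G.Adj x y) : #U ≤ 2 + degIn G U x + degIn G U y := by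
  classical
  by_contra! hlt
  obtain ⟨w, hw, hwX, hnon⟩ :=
    exists_not_adj_of_sum_degIn_add_card_lt G (S := {x, y}) (X := {x, y}) (U := U)
      (by rw [sum_pair hxy, card_pair hxy]; omega)
  obtain ⟨hwx, hwy⟩ : w ≠ x ∧ w ≠ y := by simpa using hwX
  have hpos := adjInd_add_adjInd_pos htriple hx hy hw hxy hwx.symm hwy.symm hadj
  rw [(adjInd_eq_zero_iff G).2 (hnon x (by simp)),
    (adjInd_eq_zero_iff G).2 (hnon y (by simp))] at hpos
  exact hpos.false

theorem card_le_degIn_add_two {R : Finset W} (htriple : ∀ S ⊆ R, #S = 3 → 1 < edgeCount G S)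
    {r : W} (hr : r ∈ R) : #R ≤ degIn G R r + 2 := by
  classical
  by_contra! hlt
  obtain ⟨a, ha, hra, hnra⟩ := exists_not_adj_of_degIn_add_one_lt G
    (show degIn G R r + 1 < #R by omega)
  obtain ⟨b, hb, hbX, hrb⟩ := exists_not_adj_of_sum_degIn_add_card_lt G (S := {r}) (X := {r, a})
    (U := R) (by rw [sum_singleton, card_pair hra]; omega)
  obtain ⟨hbr, hba⟩ : b ≠ r ∧ b ≠ a := by simpa using hbX
  have hmany := htriple {r, a, b} (by simp [insert_subset_iff, *])
    (card_eq_three.2 ⟨r, a, b, hra, hbr.symm, hba.symm, rfl⟩)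
  rw [edgeCount_triple G hra hbr.symm hba.symm,
    (adjInd_eq_zero_iff G).2 hnra,
    (adjInd_eq_zero_iff G).2 (hrb r (mem_singleton_self r))] at hmany
  have := adjInd_le_one G a b
  omega

theorem exists_triple_of_two_mul_edgeCount_lt {U : Finset W}
    (h : 2 * edgeCount G U < #U * (#U - 2)) : ∃ S ⊆ U, #S = 3 ∧ edgeCount G S ≤ 1 := by
  by_contra! htriple
  have hsum : ∑ _ ∈ U, (#U - 2) ≤ ∑ v ∈ U, degIn G U v := sum_le_sum fun v hv ↦
    Nat.sub_le_iff_le_add.2 (card_le_degIn_add_two htriple hv)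
  rw [sum_const, smul_eq_mul, ← two_mul_edgeCount] at hsum
  omega

theorem exists_disjoint_triples [DecidableEq W] {U S T : Finset W}
    (htriple : ∀ S ⊆ U, #S = 3 → 0 < edgeCount G S) (hSU : S ⊆ U) (hTU : T ⊆ U)
    (hdisj : Disjoint S T) (hS : #S = 3) (hT : #T = 3) (hedge : edgeCount G S ≤ 1)
    (hcross : ∑ v ∈ S, degIn G T v ≤ 3) :
    ∃ S₁ S₂, S₁ ⊆ S ∪ T ∧ S₂ ⊆ (S ∪ T) \ S₁ ∧ #S₁ = 3 ∧ #S₂ = 3 ∧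
      edgeCount G S₁ ≤ 1 ∧ edgeCount G S₂ ≤ 1 := by
  obtain ⟨x, y, z, hxy, hxz, hyz, rfl, hnxy, hnyz⟩ := exists_not_adj_of_edgeCount_le_one G hS hedge
  obtain ⟨a, b, c, hab, hac, hbc, rfl⟩ := card_eq_three.1 hT
  simp only [insert_subset_iff, singleton_subset_iff] at hSU hTU
  simp only [disjoint_insert_left, disjoint_singleton_left, mem_insert, mem_singleton,
    not_or] at hdisj
  obtain ⟨⟨hx, hy, hz⟩, ha, hb, hc⟩ := hSU, hTU
  obtain ⟨⟨hxa, hxb, hxc⟩, ⟨hya, hyb, hyc⟩, hza, hzb, hzc⟩ := hdisj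
  have hpair : ∀ p ∈ U, x ≠ p → y ≠ p → z ≠ p →
      0 < adjInd G x p + adjInd G y p ∧ 0 < adjInd G y p + adjInd G z p :=
    fun p hp hxp hyp hzp ↦ ⟨adjInd_add_adjInd_pos htriple hx hy hp hxy hxp hyp hnxy,
      adjInd_add_adjInd_pos htriple hy hz hp hyz hyp hzp hnyz⟩
  have hpa := hpair a ha hxa hya hza
  have hpb := hpair b hb hxb hyb hzb
  have hpc := hpair c hc hxc hyc hzc
  have hab_le := adjInd_le_one G a b
  rw [← adjInd_eq_zero_iff] at hnyz
  rw [sum_insert (by simp [hxy, hxz]), sum_pair hyz] at hcross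
  simp only [degIn_insert G (show a ∉ ({b, c} : Finset W) by simp [hab, hac]),
    degIn_insert G (show b ∉ ({c} : Finset W) by simp [hbc]), degIn_singleton] at hcross
  refine ⟨{x, a, b}, {y, z, c}, ?_, ?_, by simp [*], by simp [*], ?_, ?_⟩
  · simp [insert_subset_iff]
  · simp [insert_subset_iff, *, Ne.symm]
  · rw [edgeCount_triple G hxa hxb hab]; omega
  · rw [edgeCount_triple G hyz hyc hzc]; omega

theorem sum_degIn_biUnion_lt [DecidableEq W] {U T : Finset W} {C : Finset (Finset W)} {k : ℕ}
    (hC : IsTriplePacking G U C) (hU : 2 * k + 2 ≤ #U) (hlt : 2 * k + #C < #U)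
    (hR : ∀ S ⊆ U \ C.biUnion id, #S = 3 → 1 < edgeCount G S) (hTR : T ⊆ U \ C.biUnion id)
    (hT : #T = 3) (hlow : ∀ v ∈ T, degIn G U v + #U ≤ 4 * k) :
    ∑ v ∈ T, degIn G (C.biUnion id) v < 4 * #C := by
  have hcard := hC.card_sdiff_biUnion
  have hdegT : ∀ r ∈ T, degIn G (C.biUnion id) r + 2 * #U ≤ 4 * k + 2 + 3 * #C := by
    intro r hr
    have := hlow r hr
    have := card_le_degIn_add_two hR (hTR hr)
    have := degIn_sdiff_add_degIn G hC.biUnion_subset r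
    omega
  obtain ⟨r, hr⟩ := card_pos.1 (show 0 < #T by omega)
  have := hdegT r hr
  have hle : ∑ v ∈ T, degIn G (C.biUnion id) v ≤ #T • #C := sum_le_card_nsmul _ _ _ fun v hv ↦ by
    have := hdegT v hv
    omega
  rw [hT, smul_eq_mul] at hle
  omega

/-- What is left of a minimal counterexample `U` with fewer than `2 * k ^ 2` edges: degrees below
`k` would allow a greedy colouring, and a set `S` spanning at most one edge would be a colour class
leaving fewer than `2 * (k - 1) ^ 2` edges. -/
structure IsCritical (G : SimpleGraph W) [DecidableRel G.Adj] (U : Finset W) (k : ℕ) : Prop where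
  le_degIn : ∀ v ∈ U, k ≤ degIn G U v
  sum_degIn_le : ∀ S ⊆ U, edgeCount G S ≤ 1 → ∑ v ∈ S, degIn G U v + 3 ≤ edgeCount G S + 4 * k

namespace IsCritical

variable {U : Finset W} {k : ℕ}

theorem edgeCount_pos_of_card_eq_three (h : IsCritical G U k) (hU : 2 * k + 2 ≤ #U) :
    ∀ S ⊆ U, #S = 3 → 0 < edgeCount G S := by
  classical
  intro S hSU hcard
  by_contra! hS
  have hdegS : ∑ _ ∈ S, k ≤ ∑ v ∈ S, degIn G U v := sum_le_sum fun v hv ↦ h.le_degIn v (hSU hv)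
  rw [sum_const, smul_eq_mul, hcard] at hdegS
  have htwo : ∀ w ∈ U \ S, 2 ≤ degIn G S w := by
    intro w hw
    obtain ⟨hwU, hwS⟩ := mem_sdiff.1 hw
    by_contra! hlt
    have hquad := h.sum_degIn_le (insert w S) (insert_subset hwU hSU)
      (by rw [edgeCount_insert G hwS]; omega)
    rw [edgeCount_insert G hwS, sum_insert hwS] at hquad
    have := h.le_degIn w hwU
    omega
  have hcount : 2 * #(U \ S) ≤ ∑ v ∈ S, degIn G U v := calc
    2 * #(U \ S) = ∑ _ ∈ U \ S, 2 := by rw [sum_const, smul_eq_mul, mul_comm]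
    _ ≤ ∑ w ∈ U \ S, degIn G S w := sum_le_sum htwo
    _ = ∑ v ∈ S, degIn G (U \ S) v := sum_degIn_comm G _ _
    _ ≤ ∑ v ∈ S, degIn G U v := sum_le_sum fun v _ ↦ degIn_mono G sdiff_subset v
  have := h.sum_degIn_le S hSU (by omega)
  have := card_sdiff_of_subset hSU
  omega

theorem degIn_add_degIn_le (h : IsCritical G U k) {x y : W} (hx : x ∈ U) (hy : y ∈ U)
    (hxy : x ≠ y) : degIn G U x + degIn G U y + 3 ≤ adjInd G x y + 4 * k := by
  classical
  have hle := h.sum_degIn_le {x, y} (by simp [insert_subset_iff, *])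
    ((edgeCount_pair G hxy).trans_le (adjInd_le_one G x y))
  rwa [sum_pair hxy, edgeCount_pair G hxy] at hle

theorem degIn_add_degIn_add_degIn_le (h : IsCritical G U k) {x y z : W} (hx : x ∈ U) (hy : y ∈ U)
    (hz : z ∈ U) (hxy : x ≠ y) (hxz : x ≠ z) (hyz : y ≠ z) (hnxy : ¬G.Adj x y)
    (hnyz : ¬G.Adj y z) : degIn G U x + degIn G U y + degIn G U z + 2 ≤ 4 * k := by
  classical
  have hedge : edgeCount G {x, y, z} = adjInd G x z := by
    rw [edgeCount_triple G hxy hxz hyz, (adjInd_eq_zero_iff G).2 hnxy,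
      (adjInd_eq_zero_iff G).2 hnyz]
    omega
  have hone := adjInd_le_one G x z
  have hle := h.sum_degIn_le {x, y, z} (by simp [insert_subset_iff, *]) (by omega)
  rw [sum_insert (by simp [hxy, hxz]), sum_pair hyz, hedge] at hle
  omega

theorem degIn_add_card_le (h : IsCritical G U k) (hU : 2 * k + 2 ≤ #U) {z : W} (hz : z ∈ U)
    (hdeg : degIn G U z + 1 < #U) : degIn G U z + #U ≤ 4 * k := by
  classical
  have htriple := h.edgeCount_pos_of_card_eq_three hU
  obtain ⟨y, hy, hzney, hzy⟩ := exists_not_adj_of_degIn_add_one_lt G hdeg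
  have hyz := hzney.symm
  have second : ∀ v, degIn G U v + 2 < #U → ∃ x ∈ U, x ≠ y ∧ x ≠ z ∧ ¬G.Adj v x := by
    intro v hv
    obtain ⟨x, hx, hxX, hvx⟩ := exists_not_adj_of_sum_degIn_add_card_lt G (S := {v})
      (X := {y, z}) (U := U) (by rwa [sum_singleton, card_pair hyz])
    obtain ⟨hxy, hxz⟩ : x ≠ y ∧ x ≠ z := by simpa using hxX
    exact ⟨x, hx, hxy, hxz, hvx v (mem_singleton_self v)⟩
  by_cases hdy : degIn G U y + 2 < #U
  · obtain ⟨x, hx, hxy, hxz, hyx⟩ := second y hdy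
    rw [G.adj_comm] at hyx hzy
    have := h.degIn_add_degIn_add_degIn_le hx hy hz hxy hxz hyz hyx hzy
    have := card_le_degIn_add_degIn_of_not_adj htriple hx hy hxy hyx
    omega
  by_cases hdz : degIn G U z + 2 < #U
  · obtain ⟨x, hx, hxy, hxz, hzx⟩ := second z hdz
    rw [G.adj_comm] at hzx
    have := h.degIn_add_degIn_add_degIn_le hx hz hy hxz hxy hzney hzx hzy
    have := card_le_degIn_add_degIn_of_not_adj htriple hx hz hxz hzx
    omega
  · have := h.degIn_add_degIn_le hz hy hzney
    rw [(adjInd_eq_zero_iff G).2 hzy] at this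
    omega

theorem degIn_add_card_lt (h : IsCritical G U k) (hU : 2 * k + 2 ≤ #U) {u w : W} (hu : u ∈ U)
    (hw : w ∈ U) (huw : u ≠ w) (hdeg : 4 * k < degIn G U w + #U) :
    degIn G U u + #U < 4 * k := by
  have huniv : #U ≤ degIn G U w + 1 := by
    by_contra! hlt
    exact hdeg.not_ge (h.degIn_add_card_le hU hw hlt)
  have := h.degIn_add_degIn_le hu hw huw
  have := adjInd_le_one G u w
  omega

theorem card_le_three_mul (h : IsCritical G U k) (hU : 2 * k + 2 ≤ #U) : #U ≤ 3 * k := by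
  obtain ⟨u, hu, w, hw, huw⟩ := one_lt_card.1 (show 1 < #U by omega)
  have := h.le_degIn u hu
  have := h.le_degIn w hw
  by_contra! hlt
  have := h.degIn_add_card_lt hU hu hw huw (by omega)
  omega

theorem exists_low_triple (h : IsCritical G U k) (hU : 2 * k + 2 ≤ #U) {R : Finset W}
    (hRU : R ⊆ U) (hR : 6 * k + 3 ≤ #R + 2 * #U) :
    ∃ T ⊆ R, #T = 3 ∧ ∀ v ∈ T, degIn G U v + #U ≤ 4 * k := by
  classical
  by_cases hall : ∀ v ∈ R, degIn G U v + #U ≤ 4 * k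
  · have := h.card_le_three_mul hU
    obtain ⟨T, hTR, hT⟩ := exists_subset_card_eq (show 3 ≤ #R by omega)
    exact ⟨T, hTR, hT, fun v hv ↦ hall v (hTR hv)⟩
  · push Not at hall
    obtain ⟨w, hw, hdeg⟩ := hall
    have hlow : ∀ v ∈ U, v ≠ w → degIn G U v + #U < 4 * k := fun v hv hvw ↦
      h.degIn_add_card_lt hU hv (hRU hw) hvw hdeg
    obtain ⟨u, hu, huw⟩ := exists_mem_ne (show 1 < #U by omega) w
    have := hlow u hu huw
    have := h.le_degIn u hu
    have := card_erase_of_mem hw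
    obtain ⟨T, hTR, hT⟩ := exists_subset_card_eq (show 3 ≤ #(R.erase w) by omega)
    exact ⟨T, hTR.trans (erase_subset w R), hT, fun v hv ↦
      (hlow v (hRU (mem_of_mem_erase (hTR hv))) (ne_of_mem_erase (hTR hv))).le⟩

theorem exists_isTriplePacking_succ (h : IsCritical G U k) (hU : 2 * k + 2 ≤ #U)
    {C : Finset (Finset W)} (hC : IsTriplePacking G U C) (hlt : 2 * k + #C < #U) :
    ∃ D, IsTriplePacking G U D ∧ #D = #C + 1 := by
  classical
  have hcard := hC.card_sdiff_biUnion
  by_cases hR : ∃ S ⊆ U \ C.biUnion id, #S = 3 ∧ edgeCount G S ≤ 1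
  · obtain ⟨S, hSR, hS, hedge⟩ := hR
    exact ⟨_, hC.insert hSR hS hedge⟩
  push Not at hR
  obtain ⟨T, hTR, hT, hlow⟩ := h.exists_low_triple hU (sdiff_subset (s := U) (t := C.biUnion id))
    (by omega)
  obtain ⟨S₀, hS₀, hcross⟩ := hC.exists_sum_degIn_lt
    (sum_degIn_biUnion_lt hC hU hlt hR hTR hT hlow)
  obtain ⟨hTU, hTC⟩ := subset_sdiff.1 hTR
  obtain ⟨S₁, S₂, hS₁, hS₂, hcard₁, hcard₂, hedge₁, hedge₂⟩ := exists_disjoint_triples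
    (h.edgeCount_pos_of_card_eq_three hU) (hC.subset S₀ hS₀) hTU
    ((disjoint_biUnion_right _ _ _).1 hTC S₀ hS₀).symm (hC.card_eq_three S₀ hS₀) hT
    (hC.edgeCount_le_one S₀ hS₀) (by omega)
  have hgrow := union_subset_union_right (s := S₀) hTR
  obtain ⟨D, hD, hcardD, hfree⟩ := hC.exists_replace hS₀ (hS₁.trans hgrow) hcard₁ hedge₁
  rw [← hcardD]
  exact ⟨_, hD.insert ((hS₂.trans (sdiff_subset_sdiff hgrow Subset.rfl)).trans hfree) hcard₂ hedge₂⟩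

theorem exists_isTriplePacking (h : IsCritical G U k) (hU : 2 * k ≤ #U)
    (hedge : edgeCount G U < 2 * k ^ 2) : ∃ C, IsTriplePacking G U C ∧ #U = 2 * k + #C := by
  classical
  rcases lt_or_ge #U (2 * k + 2) with hsmall | hlarge
  · obtain hcard | hcard : #U = 2 * k ∨ #U = 2 * k + 1 := by omega
    · exact ⟨∅, .empty U, by simpa using hcard⟩
    · obtain ⟨k, rfl⟩ := Nat.exists_eq_add_one_of_ne_zero (show k ≠ 0 by rintro rfl; simp at hedge)
      obtain ⟨S, hSU, hS, hone⟩ := exists_triple_of_two_mul_edgeCount_lt (G := G) (U := U)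
        (by rw [hcard, show 2 * (k + 1) + 1 - 2 = 2 * k + 1 by omega]; nlinarith)
      obtain ⟨hC, hcardC⟩ := (IsTriplePacking.empty U).insert (by simpa using hSU) hS hone
      exact ⟨_, hC, by rw [hcardC, hcard, card_empty]⟩
  · have hgrow : ∀ t, 2 * k + t ≤ #U → ∃ C, IsTriplePacking G U C ∧ #C = t := by
      intro t ht
      induction t with
      | zero => exact ⟨∅, .empty U, card_empty⟩
      | succ t ih =>
        obtain ⟨C, hC, rfl⟩ := ih (by omega)
        exact h.exists_isTriplePacking_succ hlarge hC (by omega)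
    obtain ⟨C, hC, hcard⟩ := hgrow (#U - 2 * k) (by omega)
    exact ⟨C, hC, by omega⟩

theorem nearIndepColorable (h : IsCritical G U k) (hedge : edgeCount G U < 2 * k ^ 2) :
    NearIndepColorable G U k k := by
  rcases le_or_gt #U (2 * k) with hsmall | hlarge
  · exact (NearIndepColorable.of_card_le hsmall).mono (by omega)
  · obtain ⟨C, hC, hcard⟩ := h.exists_isTriplePacking hlarge.le hedge
    refine hC.nearIndepColorable hcard.le ?_
    rcases lt_or_ge #U (2 * k + 2) with hU | hU
    · have hk : k ≠ 0 := by rintro rfl; simp at hedge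
      omega
    · have := h.card_le_three_mul hU
      omega

end IsCritical

theorem nearIndepColorable_self_of_edgeCount_lt {k : ℕ} {U : Finset W}
    (hU : edgeCount G U < 2 * k ^ 2) : NearIndepColorable G U k k := by
  classical
  induction k generalizing U with
  | zero => simp at hU
  | succ k ih =>
    refine NearIndepColorable.of_minDegree (fun U hU hdeg ↦ ?_) U hU
    by_contra hno
    refine hno (IsCritical.nearIndepColorable ⟨hdeg, fun S hSU hS ↦ ?_⟩ hU)
    by_contra! hsum
    have := edgeCount_sdiff_add_sum_degIn G hSU
    have hrest : edgeCount G (U \ S) < 2 * k ^ 2 := by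
      nlinarith
    exact hno ((NearIndepColorable.of_sdiff hSU hS (ih hrest)).mono (by omega))

end Critical

section TightlyCritical

variable {W : Type*} {G : SimpleGraph W} [DecidableRel G.Adj]

theorem choose_two_two_mul_add_two (n : ℕ) : (2 * n + 2).choose 2 = (n + 1) * (2 * n + 1) := by
  rw [Nat.choose_two_right]
  exact Nat.div_eq_of_eq_mul_left two_pos (by simp; ring)

theorem exists_triple_and_not_adj [DecidableEq W] {U S : Finset W} {r r' : W}
    (htriple : ∀ S ⊆ U, #S = 3 → 0 < edgeCount G S) (hSU : S ⊆ U) (hS : #S = 3)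
    (hedge : edgeCount G S ≤ 1) (hrU : r ∈ U) (hr : r ∉ S) (hr' : r' ∉ S) (hrr' : r ≠ r')
    (hdeg : degIn G S r ≤ 1) (hcross : degIn G S r + degIn G S r' ≤ 3) :
    ∃ T ⊆ S ∪ {r, r'}, #T = 3 ∧ edgeCount G T ≤ 1 ∧
      ∃ x ∈ (S ∪ {r, r'}) \ T, ∃ y ∈ (S ∪ {r, r'}) \ T, x ≠ y ∧ ¬G.Adj x y := by
  obtain ⟨x, y, z, hxy, hxz, hyz, rfl, hnxy, hnyz⟩ := exists_not_adj_of_edgeCount_le_one G hS hedge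
  simp only [insert_subset_iff, singleton_subset_iff] at hSU
  simp only [mem_insert, mem_singleton, not_or] at hr hr'
  obtain ⟨⟨hx, hy, hz⟩, ⟨hrx, hry, hrz⟩, hrx', hry', hrz'⟩ := hSU, hr, hr'
  have hposx := adjInd_add_adjInd_pos htriple hx hy hrU hxy (Ne.symm hrx) (Ne.symm hry) hnxy
  have hposz := adjInd_add_adjInd_pos htriple hy hz hrU hyz (Ne.symm hry) (Ne.symm hrz) hnyz
  simp only [adjInd_comm G _ r] at hposx hposz
  simp only [degIn_insert G (show x ∉ ({y, z} : Finset W) by simp [hxy, hxz]),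
    degIn_insert G (show y ∉ ({z} : Finset W) by simp [hyz]), degIn_singleton] at hdeg hcross
  have hxz_le := adjInd_le_one G x z
  rw [← adjInd_eq_zero_iff, adjInd_comm] at hnxy
  rw [← adjInd_eq_zero_iff] at hnyz
  obtain hfree | hfree | hfree :
      adjInd G r' x = 0 ∨ adjInd G r' y = 0 ∨ adjInd G r' z = 0 := by omega
  · refine ⟨{r, y, z}, by simp [insert_subset_iff], by simp [*], ?_, r', by simp [*, Ne.symm],
      x, by simp [*, Ne.symm], hrx', (adjInd_eq_zero_iff G).1 hfree⟩
    rw [edgeCount_triple G hry hrz hyz]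
    omega
  · refine ⟨{r, x, z}, by simp [insert_subset_iff], by simp [*], ?_, r', by simp [*, Ne.symm],
      y, by simp [*, Ne.symm], hry', (adjInd_eq_zero_iff G).1 hfree⟩
    rw [edgeCount_triple G hrx hrz hxz]
    omega
  · refine ⟨{r, y, x}, by simp [insert_subset_iff], by simp [*, Ne.symm], ?_, r',
      by simp [*, Ne.symm], z, by simp [*, Ne.symm], hrz', (adjInd_eq_zero_iff G).1 hfree⟩
    rw [edgeCount_triple G hry hrx hxy.symm]
    omega

/-- What is left of a minimal counterexample `U` with fewer than `k * (2 * k - 1)` edges that is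
not split into `k` classes of which one is independent: compared with `IsCritical`, an independent
`S` leaves fewer than `2 * (k - 1) ^ 2` edges as soon as its degree sum exceeds `3 * k - 3`, and a
one-edge `S` fewer than `(k - 1) * (2 * k - 3)` as soon as it exceeds `4 * k - 3`. -/
structure IsTightlyCritical (G : SimpleGraph W) [DecidableRel G.Adj] (U : Finset W) (k : ℕ) :
    Prop where
  le_degIn : ∀ v ∈ U, k ≤ degIn G U v
  sum_degIn_le : ∀ S ⊆ U, edgeCount G S ≤ 1 →
    ∑ v ∈ S, degIn G U v + 3 ≤ (3 + edgeCount G S) * k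

namespace IsTightlyCritical

variable {U : Finset W} {k : ℕ}

theorem isCritical (h : IsTightlyCritical G U k) : IsCritical G U k where
  le_degIn := h.le_degIn
  sum_degIn_le S hSU hS := by
    have := h.sum_degIn_le S hSU hS
    interval_cases edgeCount G S <;> omega

theorem edgeCount_pos_of_card_eq_three (h : IsTightlyCritical G U k) :
    ∀ S ⊆ U, #S = 3 → 0 < edgeCount G S := by
  intro S hSU hcard
  by_contra! hS
  have hsum : ∑ _ ∈ S, k ≤ ∑ v ∈ S, degIn G U v := sum_le_sum fun v hv ↦ h.le_degIn v (hSU hv)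
  have := h.sum_degIn_le S hSU (by omega)
  rw [sum_const, smul_eq_mul, hcard] at hsum
  rw [Nat.le_zero.1 hS] at this
  omega

theorem degIn_add_degIn_le_of_not_adj (h : IsTightlyCritical G U k) {x y : W} (hx : x ∈ U)
    (hy : y ∈ U) (hxy : x ≠ y) (hadj : ¬G.Adj x y) : degIn G U x + degIn G U y + 3 ≤ 3 * k := by
  classical
  have hedge : edgeCount G {x, y} = 0 := by rwa [edgeCount_pair G hxy, adjInd_eq_zero_iff]
  have hle := h.sum_degIn_le {x, y} (by simp [insert_subset_iff, *]) (by omega)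
  rwa [sum_pair hxy, hedge] at hle

theorem degIn_add_degIn_le (h : IsTightlyCritical G U k) {x y : W} (hx : x ∈ U) (hy : y ∈ U)
    (hxy : x ≠ y) : degIn G U x + degIn G U y + 3 ≤ 4 * k := by
  classical
  have hone := (edgeCount_pair G hxy).trans_le (adjInd_le_one G x y)
  have hle := h.sum_degIn_le {x, y} (by simp [insert_subset_iff, *]) hone
  rw [sum_pair hxy] at hle
  exact hle.trans (Nat.mul_le_mul_right k (by omega))

theorem exists_not_adj_of_mem_sdiff_biUnion [DecidableEq W] (h : IsTightlyCritical G U k)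
    {C : Finset (Finset W)} (hC : IsTriplePacking G U C) (hU : #U = 2 * k + #C)
    (hlt : #C < k) (hclique : ∀ x ∈ U \ C.biUnion id, ∀ y ∈ U \ C.biUnion id, x ≠ y → G.Adj x y)
    {r : W} (hr : r ∈ U \ C.biUnion id) : ∃ p ∈ U, r ≠ p ∧ ¬G.Adj r p := by
  refine exists_not_adj_of_degIn_add_one_lt G ?_
  by_contra! huniv
  have hcard := hC.card_sdiff_biUnion
  obtain ⟨r', hr', hne⟩ := exists_mem_ne (show 1 < #(U \ C.biUnion id) by omega) r
  have hsum := h.degIn_add_degIn_le (sdiff_subset hr) (sdiff_subset hr') hne.symm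
  have hsplit := degIn_sdiff_add_degIn G hC.biUnion_subset r'
  have hrest := card_le_degIn_add_one G (hclique r' hr')
  obtain ⟨S, hS, hnone⟩ := hC.exists_sum_degIn_lt (T := {r'}) (q := 1)
    (by rw [sum_singleton]; omega)
  rw [sum_degIn_comm, sum_singleton] at hnone
  have hr'S : r' ∉ S := fun hmem ↦ (mem_sdiff.1 hr').2 (mem_biUnion.2 ⟨S, hS, hmem⟩)
  obtain ⟨x, y, z, hxy, -, -, rfl, hadj, -⟩ := exists_not_adj_of_edgeCount_le_one G
    (hC.card_eq_three S hS) (hC.edgeCount_le_one S hS)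
  have hSU := hC.subset _ hS
  have hpos := adjInd_add_adjInd_pos h.edgeCount_pos_of_card_eq_three (hSU (by simp))
    (hSU (by simp)) (sdiff_subset hr') hxy (by grind) (by grind) hadj
  have hpair : degIn G {x, y} r' = adjInd G x r' + adjInd G y r' := by
    rw [degIn_insert G (by simpa using hxy), degIn_singleton, adjInd_comm, adjInd_comm G r' y]
  have := degIn_mono G (show {x, y} ⊆ ({x, y, z} : Finset W) by simp [insert_subset_iff]) r'
  omega

theorem degIn_biUnion_add_two_le [DecidableEq W] (h : IsTightlyCritical G U k)
    {C : Finset (Finset W)} (hC : IsTriplePacking G U C) (hU : #U = 2 * k + #C)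
    (hlt : #C < k) (hclique : ∀ x ∈ U \ C.biUnion id, ∀ y ∈ U \ C.biUnion id, x ≠ y → G.Adj x y)
    {r : W} (hr : r ∈ U \ C.biUnion id) : degIn G (C.biUnion id) r + 2 ≤ 2 * #C := by
  obtain ⟨p, hp, hrp, hadj⟩ := h.exists_not_adj_of_mem_sdiff_biUnion hC hU hlt hclique hr
  have := h.degIn_add_degIn_le_of_not_adj (sdiff_subset hr) hp hrp hadj
  have := h.le_degIn p hp
  have := degIn_sdiff_add_degIn G hC.biUnion_subset r
  have := card_le_degIn_add_one G (hclique r hr)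
  have := hC.card_sdiff_biUnion
  omega

theorem exists_isTriplePacking_not_adj [DecidableEq W] (h : IsTightlyCritical G U k)
    {C : Finset (Finset W)} (hC : IsTriplePacking G U C) (hU : #U = 2 * k + #C) (hlt : #C < k) :
    ∃ D, IsTriplePacking G U D ∧ #D = #C ∧
      ∃ x ∈ U \ D.biUnion id, ∃ y ∈ U \ D.biUnion id, x ≠ y ∧ ¬G.Adj x y := by
  by_cases hclique : ∀ x ∈ U \ C.biUnion id, ∀ y ∈ U \ C.biUnion id, x ≠ y → G.Adj x y
  swap
  · push Not at hclique
    exact ⟨C, hC, rfl, hclique⟩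
  have hcard := hC.card_sdiff_biUnion
  obtain ⟨r, hr, r', hr', hne⟩ := one_lt_card.1 (show 1 < #(U \ C.biUnion id) by omega)
  have hlow := h.degIn_biUnion_add_two_le hC hU hlt hclique hr
  have hlow' := h.degIn_biUnion_add_two_le hC hU hlt hclique hr'
  obtain ⟨S₀, hS₀, hcross⟩ := hC.exists_sum_degIn_lt (T := {r, r'}) (q := 4)
    (by rw [sum_pair hne]; omega)
  rw [sum_degIn_comm, sum_pair hne] at hcross
  have hnotMem : ∀ v ∈ U \ C.biUnion id, v ∉ S₀ := fun v hv hvS ↦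
    (mem_sdiff.1 hv).2 (mem_biUnion.2 ⟨S₀, hS₀, hvS⟩)
  have hpair : ({r, r'} : Finset W) ⊆ U \ C.biUnion id := by simp [insert_subset_iff, *]
  obtain ⟨T, hT, hcardT, hedge, x, hx, y, hy, hxy, hadj⟩ : ∃ T ⊆ S₀ ∪ {r, r'}, #T = 3 ∧
      edgeCount G T ≤ 1 ∧ ∃ x ∈ (S₀ ∪ {r, r'}) \ T, ∃ y ∈ (S₀ ∪ {r, r'}) \ T,
        x ≠ y ∧ ¬G.Adj x y := by
    have hswap := fun s s' hs hs' ↦ exists_triple_and_not_adj (r := s) (r' := s')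
      h.edgeCount_pos_of_card_eq_three (hC.subset S₀ hS₀) (hC.card_eq_three S₀ hS₀)
      (hC.edgeCount_le_one S₀ hS₀) (sdiff_subset hs) (hnotMem s hs) (hnotMem s' hs')
    rcases le_or_gt (degIn G S₀ r) 1 with hdeg | hdeg
    · exact hswap r r' hr hr' hne hdeg (by omega)
    · rw [pair_comm]
      exact hswap r' r hr' hr hne.symm (by omega) (by omega)
  have hgrow := union_subset_union_right (s := S₀) hpair
  obtain ⟨D, hD, hcardD, hfree⟩ := hC.exists_replace hS₀ (hT.trans hgrow) hcardT hedge
  have hfree := (sdiff_subset_sdiff hgrow Subset.rfl).trans hfree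
  exact ⟨D, hD, hcardD, x, hfree hx, y, hfree hy, hxy, hadj⟩

theorem nearIndepColorable {k : ℕ} (h : IsTightlyCritical G U (k + 1))
    (hedge : edgeCount G U < (2 * k + 2).choose 2) : NearIndepColorable G U (k + 1) k := by
  classical
  rcases lt_or_ge #U (2 * k + 2) with hsmall | hlarge
  · exact (NearIndepColorable.of_card_le (by omega)).mono (by omega)
  have hcard : #U < 3 * (k + 1) := by
    obtain ⟨x, hx, y, hy, hxy, hadj⟩ := exists_not_adj_of_edgeCount_lt_choose G
      (hedge.trans_le (Nat.choose_le_choose 2 hlarge))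
    have := h.degIn_add_degIn_le_of_not_adj hx hy hxy hadj
    have := card_le_degIn_add_degIn_of_not_adj h.edgeCount_pos_of_card_eq_three hx hy hxy hadj
    omega
  have hchoose : (2 * k + 2).choose 2 ≤ 2 * (k + 1) ^ 2 := by
    rw [choose_two_two_mul_add_two]
    nlinarith
  obtain ⟨C, hC, hU⟩ := h.isCritical.exists_isTriplePacking hlarge (hedge.trans_le hchoose)
  obtain ⟨D, hD, hcardD, x, hx, y, hy, hxy, hadj⟩ :=
    h.exists_isTriplePacking_not_adj hC hU (by omega)
  have hpair : ({x, y} : Finset W) ⊆ U \ D.biUnion id := by simp [insert_subset_iff, *]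
  obtain ⟨hpairU, hpairD⟩ := subset_sdiff.1 hpair
  have hzero : edgeCount G {x, y} = 0 := by rwa [edgeCount_pair G hxy, adjInd_eq_zero_iff]
  have hrest := hD.sdiff fun S hS ↦ ((disjoint_biUnion_right _ _ _).1 hpairD S hS).symm
  have hcard' := card_sdiff_of_subset hpairU
  rw [card_pair hxy] at hcard'
  exact (NearIndepColorable.of_sdiff hpairU (by omega)
    (hrest.nearIndepColorable (k := k) (by omega) (by omega))).mono (by omega)

end IsTightlyCritical

theorem nearIndepColorable_succ_of_edgeCount_lt_choose {k : ℕ} {U : Finset W}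
    (hU : edgeCount G U < (2 * k + 2).choose 2) : NearIndepColorable G U (k + 1) k := by
  classical
  induction k generalizing U with
  | zero =>
    have hzero : edgeCount G U = 0 := by simpa using hU
    exact (NearIndepColorable.of_sdiff Subset.rfl (by omega)
      (by simpa using .empty 0 0)).mono (by omega)
  | succ k ih =>
    refine NearIndepColorable.of_minDegree (fun U hU hdeg ↦ ?_) U hU
    by_contra hno
    refine hno (IsTightlyCritical.nearIndepColorable ⟨hdeg, fun S hSU hS ↦ ?_⟩ hU)
    by_contra! hsum
    have hsplit := edgeCount_sdiff_add_sum_degIn G hSU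
    rw [choose_two_two_mul_add_two] at hU
    obtain hzero | hone : edgeCount G S = 0 ∨ edgeCount G S = 1 := by omega
    · rw [hzero] at hsum hsplit
      exact hno ((NearIndepColorable.of_sdiff hSU hS
        (nearIndepColorable_self_of_edgeCount_lt (k := k + 1) (by nlinarith))).mono (by omega))
    · rw [hone] at hsum hsplit
      exact hno ((NearIndepColorable.of_sdiff hSU hS
        (ih (by rw [choose_two_two_mul_add_two]; nlinarith))).mono (by omega))

theorem nearIndepColorable_of_edgeCount_lt_choose {k b : ℕ} {U : Finset W} (hb : b < k)
    (hU : edgeCount G U < (k + b + 1).choose 2) : NearIndepColorable G U k b := by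
  classical
  induction k, hb using Nat.le_induction generalizing U with
  | base => exact nearIndepColorable_succ_of_edgeCount_lt_choose (by convert hU using 2; omega)
  | succ k hbk ih =>
    refine NearIndepColorable.of_minDegree (fun U hU hdeg ↦ ?_) U hU
    rcases lt_or_ge (edgeCount G U) ((#U).choose 2) with hlt | hge
    · obtain ⟨x, hx, y, hy, hxy, hadj⟩ := exists_not_adj_of_edgeCount_lt_choose G hlt
      have hpair : ({x, y} : Finset W) ⊆ U := by simp [insert_subset_iff, *]
      have hzero : edgeCount G {x, y} = 0 := by rwa [edgeCount_pair G hxy, adjInd_eq_zero_iff]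
      have hrest := edgeCount_sdiff_add_sum_degIn G hpair
      have hpascal : (k + 1 + b + 1).choose 2 = (k + b + 1) + (k + b + 1).choose 2 := by
        rw [show k + 1 + b + 1 = k + b + 1 + 1 by omega, Nat.choose_succ_succ, Nat.choose_one_right]
      have := hdeg x hx
      have := hdeg y hy
      rw [sum_pair hxy] at hrest
      exact (NearIndepColorable.of_sdiff hpair (by omega) (ih (by omega))).mono (by omega)
    · have hcard : #U < k + 1 + b + 1 := lt_of_not_ge fun hle ↦
        (hge.trans_lt hU).not_ge (Nat.choose_le_choose 2 hle)
      exact (NearIndepColorable.of_card_le (by omega)).mono (by omega)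

end TightlyCritical

section ColoringExistence

variable {W : Type*} {G : SimpleGraph W} [DecidableRel G.Adj]

theorem exists_nearIndepColorable {U : Finset W} {k : ℕ} (hU : edgeCount G U < 2 * k ^ 2) :
    ∃ b, NearIndepColorable G U k b ∧ (b ≠ 0 → (k + b).choose 2 ≤ edgeCount G U) := by
  have hself := nearIndepColorable_self_of_edgeCount_lt hU
  by_cases hex : ∃ b < k, edgeCount G U < (k + b + 1).choose 2
  · have hmin := fun b hb ↦ Nat.find_min hex (m := b) hb
    obtain ⟨hlt, hedge⟩ := Nat.find_spec hex
    refine ⟨Nat.find hex, nearIndepColorable_of_edgeCount_lt_choose hlt hedge, fun hne ↦ ?_⟩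
    obtain ⟨b, hb⟩ := Nat.exists_eq_add_one_of_ne_zero hne
    have := hmin b (by omega)
    push Not at this
    rw [hb]
    exact this (by omega)
  · push Not at hex
    refine ⟨k, hself, fun hne ↦ ?_⟩
    obtain ⟨k, rfl⟩ := Nat.exists_eq_add_one_of_ne_zero hne
    exact hex k k.lt_succ_self

end ColoringExistence

section Partitions

theorem IsKPartition.sum_sum_eq_sum {W M : Type*} [Fintype W] [AddCommMonoid M] {k : ℕ}
    {P : Fin k → Finset W} (hP : IsKPartition P) (f : W → M) : ∑ i, ∑ v ∈ P i, f v = ∑ v, f v := by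
  classical
  rw [← sum_biUnion fun i _ j _ hij ↦ hP.1 i j hij]
  exact sum_congr (eq_univ_iff_forall.2 fun v ↦ by simpa using hP.2 v) fun _ _ ↦ rfl

variable (G : SimpleGraph V) [DecidableRel G.Adj]

theorem eCross_eq_sum_degIn (S T : Finset V) : eCross G S T = ∑ v ∈ S, degIn G T v := by
  have hpairs : ({p | G.Adj p.1 p.2 ∧ p.1 ∈ S ∧ p.2 ∈ T} : Finset (V × V)) =
      {p ∈ S ×ˢ T | G.Adj p.1 p.2} := by
    ext p
    simp [and_comm]
  rw [eCross, hpairs, card_filter, sum_product]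
  simp only [degIn, card_filter]

theorem eIn_eq_edgeCount (S : Finset V) : eIn G S = edgeCount G S := by
  change eCross G S S / 2 = edgeCount G S
  rw [eCross_eq_sum_degIn, ← two_mul_edgeCount]
  omega

theorem IsKPartition.crossTotal_add_sum_eIn {k : ℕ} {P : Fin k → Finset V}
    (hP : IsKPartition P) : crossTotal G P + ∑ i, eIn G (P i) = #G.edgeFinset := by
  have hsymm : ∀ i j, eCross G (P i) (P j) = eCross G (P j) (P i) := fun i j ↦ by
    rw [eCross_eq_sum_degIn, eCross_eq_sum_degIn, sum_degIn_comm]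
  have hoff : 2 * crossTotal G P = ∑ i, ∑ j ∈ {i}ᶜ, eCross G (P i) (P j) := by
    rw [← sum_sum_Ioi_add_eq_sum_sum_off_diag, crossTotal, mul_sum]
    refine sum_congr rfl fun i _ ↦ ?_
    rw [← sum_filter, filter_lt_eq_Ioi, mul_sum]
    exact sum_congr rfl fun j _ ↦ by rw [two_mul, hsymm j i]
  have hdiag : ∀ i, eCross G (P i) (P i) = 2 * eIn G (P i) := fun i ↦ by
    rw [eIn_eq_edgeCount, two_mul_edgeCount, eCross_eq_sum_degIn]
  have htotal : ∑ i, ∑ j, eCross G (P i) (P j) = 2 * #G.edgeFinset := by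
    rw [← edgeCount_univ, two_mul_edgeCount, ← hP.sum_sum_eq_sum]
    simp only [eCross_eq_sum_degIn]
    refine sum_congr rfl fun i _ ↦ ?_
    rw [sum_comm]
    refine sum_congr rfl fun v _ ↦ ?_
    simp only [degIn_eq_sum, hP.sum_sum_eq_sum]
  simp only [fun i ↦ Fintype.sum_eq_add_sum_compl i (eCross G (P i) <| P ·), sum_add_distrib,
    hdiag, ← mul_sum, ← hoff] at htotal
  omega

variable {G}

theorem NearIndepColorable.exists_isKPartition {k b : ℕ} (h : NearIndepColorable G univ k b) :
    ∃ P : Fin k → Finset V, IsKPartition P ∧ (∀ i, eIn G (P i) ≤ min 1 b) ∧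
      #G.edgeFinset ≤ crossTotal G P + b := by
  obtain ⟨f, hlt, hclass, hsum⟩ := h
  have hP : IsKPartition fun i : Fin k ↦ ({v | f v = i} : Finset V) := by
    refine ⟨fun i j hij ↦ disjoint_filter.2 fun v _ hi hj ↦ hij (Fin.ext (hi.symm.trans hj)),
      fun v ↦ ⟨⟨f v, hlt v (mem_univ v)⟩, by simp⟩⟩
  rw [← Fin.sum_univ_eq_sum_range (fun i ↦ edgeCount G {v | f v = i})] at hsum
  have htotal := hP.crossTotal_add_sum_eIn G
  simp only [eIn_eq_edgeCount] at htotal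
  refine ⟨_, hP, fun i ↦ ?_, by omega⟩
  rw [eIn_eq_edgeCount]
  exact le_min (hclass i) ((single_le_sum (f := fun i : Fin k ↦ edgeCount G {v | f v = i})
    (fun _ _ ↦ Nat.zero_le _) (mem_univ i)).trans hsum)

end Partitions

section Bounds

theorem hfun_nonneg {x : ℝ} (hx : 0 ≤ x) : 0 ≤ hfun x :=
  sub_nonneg.2 (Real.le_sqrt_of_sq_le (by linarith))

theorem hfun_sq_add_hfun {x : ℝ} (hx : 0 ≤ x) : hfun x ^ 2 + hfun x = 2 * x := by
  unfold hfun
  linear_combination Real.sq_sqrt (show 0 ≤ 2 * x + 1 / 4 by linarith)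

theorem le_hfun {a x : ℝ} (h : a * (a + 1) ≤ 2 * x) : a ≤ hfun x :=
  le_sub_iff_add_le.2 (Real.le_sqrt_of_sq_le (by linarith))

theorem sub_one_le_hfun_of_choose_two_le {n m : ℕ} (h : n.choose 2 ≤ m) :
    (n : ℝ) - 1 ≤ hfun m := by
  refine le_hfun ?_
  have hm : ((n.choose 2 : ℕ) : ℝ) ≤ m := by exact_mod_cast h
  rw [Nat.cast_choose_two] at hm
  linarith

theorem class_bound_eq {k x : ℝ} (hx : 0 ≤ x) :
    x / k ^ 2 + (k - 1) / (2 * k ^ 2) * hfun x = hfun x * (hfun x + k) / (2 * k ^ 2) := by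
  linear_combination -(1 / (2 * k ^ 2)) * hfun_sq_add_hfun hx

theorem cut_bound_eq {k x : ℝ} (hk : k ≠ 0) (hx : 0 ≤ x) :
    (k - 1) / k * x + (k - 1) / (2 * k) * hfun x - (k - 2) ^ 2 / (8 * k) =
      x - (2 * hfun x - k + 2) ^ 2 / (8 * k) := by
  field_simp
  linear_combination 8 * hfun_sq_add_hfun hx

theorem min_one_le_class_bound {k x : ℝ} {b : ℕ} (hk : 0 < k) (hx : 0 ≤ x)
    (hb : b ≠ 0 → k + b - 1 ≤ hfun x) :
    ((min 1 b : ℕ) : ℝ) ≤ x / k ^ 2 + (k - 1) / (2 * k ^ 2) * hfun x := by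
  have hnonneg := hfun_nonneg hx
  rw [class_bound_eq hx]
  rcases Nat.eq_zero_or_pos b with rfl | hpos
  · simp only [zero_le, inf_of_le_right, Nat.cast_zero]
    positivity
  · have hk_le : k ≤ hfun x := by
      have hone : (1 : ℝ) ≤ b := by exact_mod_cast hpos
      linarith [hb hpos.ne']
    rw [min_eq_left (show 1 ≤ b from hpos), Nat.cast_one, le_div_iff₀ (by positivity)]
    nlinarith

-- AM-GM for `2 * t` and `k`, where `t = hfun x - k + 1`.
theorem le_cut_deficit {k x : ℝ} {b : ℕ} (hk : 0 < k) (hb : b ≠ 0 → k + b - 1 ≤ hfun x) :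
    (b : ℝ) ≤ (2 * hfun x - k + 2) ^ 2 / (8 * k) := by
  rcases eq_or_ne b 0 with rfl | hne
  · rw [Nat.cast_zero]
    positivity
  · rw [le_div_iff₀ (by positivity)]
    calc (b : ℝ) * (8 * k) ≤ (hfun x - k + 1) * (8 * k) := by gcongr; linarith [hb hne]
      _ ≤ (hfun x - k + 1) * (8 * k) + (2 * hfun x - 3 * k + 2) ^ 2 :=
        le_add_of_nonneg_right (sq_nonneg _)
      _ = (2 * hfun x - k + 2) ^ 2 := by ring

end Bounds

theorem stmt_4_general {V : Type*} [Fintype V] [DecidableEq V]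
    (G : SimpleGraph V) [DecidableRel G.Adj] (k m : ℕ)
    (hm : m = G.edgeFinset.card) (hsize : m < 2 * k ^ 2) :
    ∃ P : Fin k → Finset V, IsKPartition P ∧
      (∀ i : Fin k, (eIn G (P i) : ℝ) ≤ (m : ℝ) / k ^ 2 + (k - 1) / (2 * k ^ 2) * hfun m) ∧
      ((k : ℝ) - 1) / k * m + ((k : ℝ) - 1) / (2 * k) * hfun m - ((k : ℝ) - 2) ^ 2 / (8 * k)
        ≤ (crossTotal G P : ℝ) := by
  have hk : (0 : ℝ) < k := Nat.cast_pos.2 (Nat.pos_of_ne_zero (by rintro rfl; simp at hsize))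
  have hm0 : (0 : ℝ) ≤ m := m.cast_nonneg
  obtain ⟨b, hcol, hb⟩ := exists_nearIndepColorable (G := G) (U := univ)
    (by rwa [edgeCount_univ, ← hm])
  rw [edgeCount_univ, ← hm] at hb
  have hbound : b ≠ 0 → (k : ℝ) + b - 1 ≤ hfun m := fun hne ↦ by
    simpa using sub_one_le_hfun_of_choose_two_le (hb hne)
  obtain ⟨P, hP, hclass, hcut⟩ := hcol.exists_isKPartition
  refine ⟨P, hP, fun i ↦ ?_, ?_⟩
  · exact (Nat.cast_le.2 (hclass i)).trans (min_one_le_class_bound hk hm0 hbound)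
  · have hcut' : (m : ℝ) ≤ crossTotal G P + b := by rw [hm]; exact_mod_cast hcut
    rw [cut_bound_eq hk.ne' hm0]
    linarith [le_cut_deficit hk hbound]

/-- For `k ≥ 3` and `m < 2k²`, every graph with `m` edges has a `k`-partition with
`max eᵢ(Vᵢ) ≤ m/k² + (k-1)/(2k²)·h(m)` and
`e(V₁,…,V_k) ≥ (k-1)/k·m + (k-1)/(2k)·h(m) − (k-2)²/(8k)`. -/
theorem stmt_4 {V : Type*} [Fintype V] [DecidableEq V]
    (G : SimpleGraph V) [DecidableRel G.Adj] (k : ℕ) (hk : 3 ≤ k)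
    (m : ℕ) (hm : m = G.edgeFinset.card) (hsize : m < 2 * k ^ 2) :
    ∃ P : Fin k → Finset V, IsKPartition P ∧
      (∀ i : Fin k, (eIn G (P i) : ℝ) ≤ (m : ℝ) / k ^ 2 + (k - 1) / (2 * k ^ 2) * hfun m) ∧
      ((k : ℝ) - 1) / k * m + ((k : ℝ) - 1) / (2 * k) * hfun m - ((k : ℝ) - 2) ^ 2 / (8 * k)
        ≤ (crossTotal G P : ℝ) :=
  stmt_4_general G k m hm hsize
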